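/- arXiv:2402.03682 — 2 statements merged into one kernel-verified Lean document; each statement's English description precedes it below -/
import Mathlib

section
/- Effective support of mode-dependent deformation terms (scalar model of the paper's Proposition asserting that the derivative of the universal Dirac operator at a mode-dependent deformation has effective support at scale 1/M). Let m, n be nonnegative integers with w = m + n in {1, 2}, set sigma = w - 3/2, and let nu be in [0, 1/2), M >= 1, C_1 >= 1. There is a constant C, depending only on m, n, nu, C_1, R_0 and r_0, such that the following holds. Let c : Z -> C be a finitely supported sequence satisfying ||c||_{m' + 1/2} <= C_1 * M^{m'} * ||c||_{1/2} for every nonnegative integer m', let C_0 >= 0, and let G : N -> C be measurable with |G(t,z)| <= C_0 * |z|^sigma almost everywhere. Then the mode-dependent multiplier u of order (m,n) built from c satisfies Int_N |u(t,z)|^2 * |G(t,z)|^2 * |z|^(-2*nu) dt dA(z) <= C * C_0^2 * M^{2*nu} * ||c||_{1/2}^2. -/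
open MeasureTheory Complex
open scoped ENNReal

noncomputable section

instance : Fact (0 < 2 * Real.pi) := ⟨by positivity⟩

/-- The circle `ℝ / 2πℤ`. -/
abbrev Circ := AddCircle (2 * Real.pi)

/-- The punctured disk `D* = {z : 0 < |z| ≤ r₀}`, modeled inside `ℂ ≃ ℝ²`. -/
def punctDisk (r₀ : ℝ) : Set ℂ := {z : ℂ | 0 < ‖z‖ ∧ ‖z‖ ≤ r₀}

/-- The product measure on `N = T × D*`. -/
def μN (r₀ : ℝ) : Measure (Circ × ℂ) :=
  (volume : Measure Circ).prod (volume.restrict (punctDisk r₀))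

/-- The mode-dependent multiplier of order `(m, n)` built from the finitely supported
sequence `c`, with cutoff profile `χ`:
`u(t,z) = ∑_p c_p (i p)^n |p|^m χ(|p| |z|) e^{i p t}`. -/
def modeMult (χ : ℝ → ℝ) (c : ℤ →₀ ℂ) (m n : ℕ) (q : Circ × ℂ) : ℂ :=
  ∑ p ∈ c.support,
    c p * (Complex.I * (p : ℂ)) ^ n * ((|p| : ℤ) : ℂ) ^ m *
      ((χ (((|p| : ℤ) : ℝ) * ‖q.2‖) : ℝ) : ℂ) * fourier p q.1

/-- The squared Sobolev norm `‖c‖_s² = ∑_p (1 + p²)^s |c_p|²`. -/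
def sobNormSq (c : ℤ →₀ ℂ) (s : ℝ) : ℝ :=
  ∑ p ∈ c.support, (1 + (p : ℝ) ^ 2) ^ s * ‖c p‖ ^ 2

/-- The Sobolev norm `‖c‖_s`. -/
def sobNorm (c : ℤ →₀ ℂ) (s : ℝ) : ℝ := Real.sqrt (sobNormSq c s)

/-! Parseval in `t` decouples the modes. With `w = m + n`, the `p`-th mode lives in the disk
`|z| < 2R₀ / |p|` and has size at most `|p|^w |c_p|` there, so against `|z|^(2w - 3 - 2ν) dA` its
square integrates to at most a constant times `|p|^(1 + 2ν) |c_p|²`; the weight is integrable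
because `ν < w - 1/2`. Summing over `p` gives the squared norm of `c` of order `1/2 + ν`.
Interpolation between orders `1/2` and `k + 1/2`, in the form `x^ν ≤ 1 + x^k` at
`x = (1 + p²) / M²`, converts it to `M^(2ν)` times the squared norm of order `1/2`. -/

section RadialIntegrals

open Module (finrank)

lemma pow_pred_smul_rpow_sub {y : ℝ} (hy : 0 < y) {d : ℕ} (hd : 0 < d) (β : ℝ) :
    y ^ (d - 1) • y ^ (β - d) = y ^ (β - 1) := by
  rw [smul_eq_mul, ← Real.rpow_natCast, ← Real.rpow_add hy, Nat.cast_pred hd]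
  ring_nf

variable {E : Type*} [NormedAddCommGroup E] [NormedSpace ℝ E] [FiniteDimensional ℝ E]
  [Nontrivial E] [MeasurableSpace E] [BorelSpace E] (μ : Measure E) [μ.IsAddHaarMeasure]
  {β ρ : ℝ}

lemma integrableOn_ball_norm_rpow_sub_finrank (hβ : 0 < β) (hρ : 0 < ρ) :
    IntegrableOn (fun x : E ↦ ‖x‖ ^ (β - finrank ℝ E)) (Metric.ball 0 ρ) μ := by
  rw [integrableOn_fun_norm_addHaar μ (f := (· ^ (β - finrank ℝ E))),
    integrableOn_congr_fun
      (fun _ hy ↦ pow_pred_smul_rpow_sub hy.1 Module.finrank_pos β) measurableSet_Ioo,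
    intervalIntegral.integrableOn_Ioo_rpow_iff hρ]
  linarith

lemma setIntegral_ball_norm_rpow_sub_finrank (hβ : 0 < β) (hρ : 0 ≤ ρ) :
    ∫ x in Metric.ball (0 : E) ρ, ‖x‖ ^ (β - finrank ℝ E) ∂μ =
      finrank ℝ E * μ.real (Metric.ball 0 1) * (ρ ^ β / β) := by
  have radial : ∫ y in Set.Ioi (0 : ℝ), y ^ (finrank ℝ E - 1) •
      (Set.Iio ρ).indicator (· ^ (β - finrank ℝ E)) y = ρ ^ β / β := by
    simp_rw [← Set.indicator_smul_apply (Set.Iio ρ) fun y : ℝ ↦ y ^ (finrank ℝ E - 1)]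
    rw [setIntegral_indicator measurableSet_Iio, Set.Ioi_inter_Iio,
      setIntegral_congr_fun measurableSet_Ioo
        fun _ hy ↦ pow_pred_smul_rpow_sub hy.1 Module.finrank_pos β,
      ← integral_Ioc_eq_integral_Ioo, ← intervalIntegral.integral_of_le hρ,
      integral_rpow (Or.inl (by linarith)), sub_add_cancel, Real.zero_rpow hβ.ne', sub_zero]
  have ball_eq_preimage : Metric.ball (0 : E) ρ = norm ⁻¹' Set.Iio ρ := by ext; simp
  calc ∫ x in Metric.ball (0 : E) ρ, ‖x‖ ^ (β - finrank ℝ E) ∂μ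
      = ∫ x, (Set.Iio ρ).indicator (· ^ (β - finrank ℝ E)) ‖x‖ ∂μ := by
        rw [← integral_indicator measurableSet_ball, ball_eq_preimage]
        rfl
    _ = finrank ℝ E * μ.real (Metric.ball 0 1) * (ρ ^ β / β) := by
        rw [integral_fun_norm_addHaar, radial, nsmul_eq_mul, smul_eq_mul, mul_assoc]

lemma lintegral_norm_rpow_mul_enorm_sq_le_of_support_subset_ball {F : Type*}
    [NormedAddCommGroup F] {f : E → F} {B : ℝ} (hβ : 0 < β) (hρ : 0 < ρ)
    (hfB : ∀ x, ‖f x‖ ≤ B) (hf : f.support ⊆ Metric.ball 0 ρ) :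
    ∫⁻ x, .ofReal (‖x‖ ^ (β - finrank ℝ E)) * ‖f x‖ₑ ^ 2 ∂μ ≤
      .ofReal (finrank ℝ E * μ.real (Metric.ball 0 1) * (ρ ^ β / β) * B ^ 2) := by
  have hfB_sq (x : E) : ‖f x‖ₑ ^ 2 ≤ .ofReal (B ^ 2) := by
    rw [← ofReal_norm, ← ENNReal.ofReal_pow (norm_nonneg _)]
    exact ENNReal.ofReal_le_ofReal (pow_le_pow_left₀ (norm_nonneg _) (hfB x) 2)
  calc ∫⁻ x, .ofReal (‖x‖ ^ (β - finrank ℝ E)) * ‖f x‖ₑ ^ 2 ∂μ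
      = ∫⁻ x in Metric.ball 0 ρ, .ofReal (‖x‖ ^ (β - finrank ℝ E)) * ‖f x‖ₑ ^ 2 ∂μ := by
        refine (setLIntegral_eq_of_support_subset fun x hx ↦ hf fun hfx ↦ hx ?_).symm
        simp [hfx]
    _ ≤ ∫⁻ x in Metric.ball 0 ρ, .ofReal (‖x‖ ^ (β - finrank ℝ E)) * .ofReal (B ^ 2) ∂μ := by
        gcongr with x
        exact hfB_sq x
    _ = .ofReal (∫ x in Metric.ball 0 ρ, ‖x‖ ^ (β - finrank ℝ E) ∂μ) * .ofReal (B ^ 2) := by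
        rw [lintegral_mul_const _ (by fun_prop),
          ofReal_integral_eq_lintegral_ofReal (integrableOn_ball_norm_rpow_sub_finrank μ hβ hρ)
            (.of_forall fun x ↦ by positivity)]
    _ = .ofReal (finrank ℝ E * μ.real (Metric.ball 0 1) * (ρ ^ β / β) * B ^ 2) := by
        rw [← ENNReal.ofReal_mul (integral_nonneg fun x ↦ by positivity),
          setIntegral_ball_norm_rpow_sub_finrank μ hβ hρ.le]

end RadialIntegrals

section Parseval

open AddCircle

variable {T : ℝ} [hT : Fact (0 < T)]

lemma lintegral_enorm_sq_sum_fourier (s : Finset ℤ) (a : ℤ → ℂ) :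
    ∫⁻ t : AddCircle T, ‖∑ p ∈ s, a p * fourier p t‖ₑ ^ 2 = .ofReal (T * ∑ p ∈ s, ‖a p‖ ^ 2) := by
  let f : C(AddCircle T, ℂ) := ∑ p ∈ s, a p • fourier p
  have f_apply (t : AddCircle T) : f t = ∑ p ∈ s, a p * fourier p t := by
    simp [f, ContinuousMap.sum_apply]
  have toLp_f : f.toLp 2 haarAddCircle ℂ = ∑ p ∈ s, a p • fourierLp 2 p := by
    simp only [f, map_sum, map_smul, fourierLp]
  have norm_toLp_f : ‖f.toLp 2 haarAddCircle ℂ‖ ^ 2 = ∑ p ∈ s, ‖a p‖ ^ 2 := by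
    rw [toLp_f]
    exact orthonormal_fourier.orthogonalFamily.norm_sum a s
  have lintegral_f : ∫⁻ t, ‖f t‖ₑ ^ 2 ∂haarAddCircle = .ofReal (∑ p ∈ s, ‖a p‖ ^ 2) := by
    rw [← norm_toLp_f, ENNReal.ofReal_pow (norm_nonneg _), ofReal_norm, Lp.enorm_def,
      eLpNorm_congr_ae (f.coeFn_toLp _)]
    simpa using (eLpNorm_nnreal_pow_eq_lintegral (p := 2) two_ne_zero).symm
  simp_rw [← f_apply]
  rw [volume_eq_smul_haarAddCircle, lintegral_smul_measure, lintegral_f, smul_eq_mul,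
    ENNReal.ofReal_mul hT.out.le]

lemma lintegral_prod_mul_enorm_sq_sum_fourier {Z : Type*} [MeasurableSpace Z] (μ : Measure Z)
    [SFinite μ] {w : Z → ℝ≥0∞} (hw : Measurable w) (s : Finset ℤ) {a : ℤ → Z → ℂ}
    (ha : ∀ p, Measurable (a p)) :
    ∫⁻ q : AddCircle T × Z, w q.2 * ‖∑ p ∈ s, a p q.2 * fourier p q.1‖ₑ ^ 2 ∂(volume.prod μ) =
      .ofReal T * ∑ p ∈ s, ∫⁻ z, w z * ‖a p z‖ₑ ^ 2 ∂μ := by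
  calc ∫⁻ q : AddCircle T × Z, w q.2 * ‖∑ p ∈ s, a p q.2 * fourier p q.1‖ₑ ^ 2 ∂(volume.prod μ)
      = ∫⁻ z, w z * (∫⁻ t : AddCircle T, ‖∑ p ∈ s, a p z * fourier p t‖ₑ ^ 2) ∂μ := by
        rw [lintegral_prod_symm' _ (by fun_prop)]
        refine lintegral_congr fun z ↦ ?_
        exact lintegral_const_mul (w z) (by fun_prop)
    _ = ∫⁻ z, .ofReal T * ∑ p ∈ s, w z * ‖a p z‖ₑ ^ 2 ∂μ := by
        simp_rw [lintegral_enorm_sq_sum_fourier, ← Finset.mul_sum]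
        refine lintegral_congr fun z ↦ ?_
        rw [ENNReal.ofReal_mul hT.out.le, ENNReal.ofReal_sum_of_nonneg fun p _ ↦ by positivity,
          mul_left_comm]
        simp only [ENNReal.ofReal_pow (norm_nonneg _), ofReal_norm]
    _ = .ofReal T * ∑ p ∈ s, ∫⁻ z, w z * ‖a p z‖ₑ ^ 2 ∂μ := by
        rw [lintegral_const_mul _ (by fun_prop), lintegral_finsetSum _ fun p _ ↦ by fun_prop]

end Parseval

section SobolevInterpolation

lemma rpow_le_one_add_rpow {x ν k : ℝ} (hx : 0 ≤ x) (hν : 0 ≤ ν) (hνk : ν ≤ k) :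
    x ^ ν ≤ 1 + x ^ k := by
  have hxk : 0 ≤ x ^ k := Real.rpow_nonneg hx k
  rcases le_total x 1 with hx1 | hx1
  · linarith [Real.rpow_le_one hx hx1 hν]
  · linarith [Real.rpow_le_rpow_of_exponent_le hx1 hνk]

lemma sobNormSq_nonneg (c : ℤ →₀ ℂ) (s : ℝ) : 0 ≤ sobNormSq c s :=
  Finset.sum_nonneg fun p _ ↦ by positivity

lemma sobNorm_sq (c : ℤ →₀ ℂ) (s : ℝ) : sobNorm c s ^ 2 = sobNormSq c s :=
  Real.sq_sqrt (sobNormSq_nonneg c s)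

variable {ν k M : ℝ}

lemma sobNormSq_add_le (c : ℤ →₀ ℂ) (s : ℝ) (hν : 0 ≤ ν) (hνk : ν ≤ k) (hM : 0 < M) :
    sobNormSq c (s + ν) ≤
      M ^ (2 * ν) * (sobNormSq c s + sobNormSq c (k + s) / M ^ (2 * k)) := by
  unfold sobNormSq
  rw [Finset.sum_div, ← Finset.sum_add_distrib, Finset.mul_sum]
  refine Finset.sum_le_sum fun p _ ↦ ?_
  set A : ℝ := 1 + (p : ℝ) ^ 2
  have hA : 0 < A := by positivity
  have scale (t : ℝ) : A ^ t = M ^ (2 * t) * (A / M ^ 2) ^ t := by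
    rw [Real.div_rpow hA.le (by positivity), Real.rpow_mul hM.le, Real.rpow_two]
    field_simp
  calc A ^ (s + ν) * ‖c p‖ ^ 2
      = M ^ (2 * ν) * (A ^ s * (A / M ^ 2) ^ ν) * ‖c p‖ ^ 2 := by
        rw [Real.rpow_add hA, scale ν]
        ring
    _ ≤ M ^ (2 * ν) * (A ^ s * (1 + (A / M ^ 2) ^ k)) * ‖c p‖ ^ 2 := by
        gcongr
        exact rpow_le_one_add_rpow (by positivity) hν hνk
    _ = _ := by
        rw [Real.rpow_add hA, scale k]
        field_simp

lemma sobNormSq_add_le_of_sobNorm_le {c : ℤ →₀ ℂ} {s C₁ : ℝ} (hν : 0 ≤ ν) (hνk : ν ≤ k) (hM : 0 < M)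
    (hc : sobNorm c (k + s) ≤ C₁ * M ^ k * sobNorm c s) :
    sobNormSq c (s + ν) ≤ (1 + C₁ ^ 2) * M ^ (2 * ν) * sobNorm c s ^ 2 := by
  have hc_sq : sobNormSq c (k + s) / M ^ (2 * k) ≤ C₁ ^ 2 * sobNormSq c s := by
    rw [div_le_iff₀ (by positivity), ← sobNorm_sq, ← sobNorm_sq, mul_comm 2 k,
      Real.rpow_mul hM.le, Real.rpow_two]
    calc sobNorm c (k + s) ^ 2 ≤ (C₁ * M ^ k * sobNorm c s) ^ 2 :=
          pow_le_pow_left₀ (Real.sqrt_nonneg _) hc 2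
      _ = _ := by ring
  calc sobNormSq c (s + ν)
      ≤ M ^ (2 * ν) * (sobNormSq c s + sobNormSq c (k + s) / M ^ (2 * k)) :=
        sobNormSq_add_le c s hν hνk hM
    _ ≤ M ^ (2 * ν) * (sobNormSq c s + C₁ ^ 2 * sobNormSq c s) := by gcongr
    _ = _ := by rw [sobNorm_sq]; ring

end SobolevInterpolation

section ModeEstimates

/-- The `p`-th Fourier coefficient in `t` of the multiplier `modeMult χ c m n (t, z)`,
as a function of `z`. -/
def modeCoeff (χ : ℝ → ℝ) (c : ℤ →₀ ℂ) (m n : ℕ) (p : ℤ) (z : ℂ) : ℂ :=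
  c p * (Complex.I * (p : ℂ)) ^ n * ((|p| : ℤ) : ℂ) ^ m * ((χ (((|p| : ℤ) : ℝ) * ‖z‖) : ℝ) : ℂ)

lemma modeMult_eq_sum_modeCoeff (χ : ℝ → ℝ) (c : ℤ →₀ ℂ) (m n : ℕ) (q : Circ × ℂ) :
    modeMult χ c m n q = ∑ p ∈ c.support, modeCoeff χ c m n p q.2 * fourier p q.1 :=
  rfl

variable {χ : ℝ → ℝ} {R₀ β : ℝ} {m n : ℕ}

lemma measurable_modeCoeff (hχm : Measurable χ) (c : ℤ →₀ ℂ) (m n : ℕ) (p : ℤ) :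
    Measurable (modeCoeff χ c m n p) := by
  unfold modeCoeff
  fun_prop

lemma norm_modeCoeff_le (hχ : ∀ s, |χ s| ≤ 1) (c : ℤ →₀ ℂ) (m n : ℕ) (p : ℤ) (z : ℂ) :
    ‖modeCoeff χ c m n p z‖ ≤ |(p : ℝ)| ^ (m + n) * ‖c p‖ := by
  calc ‖modeCoeff χ c m n p z‖
      = |(p : ℝ)| ^ (m + n) * ‖c p‖ * |χ (|(p : ℝ)| * ‖z‖)| := by
        simp only [modeCoeff, norm_mul, norm_pow, norm_I, norm_intCast, norm_real, Int.cast_abs,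
          abs_abs, one_mul, Real.norm_eq_abs, pow_add]
        ring
    _ ≤ |(p : ℝ)| ^ (m + n) * ‖c p‖ := mul_le_of_le_one_right (by positivity) (hχ _)

lemma support_modeCoeff_subset (hχsupp : ∀ s, 2 * R₀ ≤ s → χ s = 0) (c : ℤ →₀ ℂ) (m n : ℕ)
    {p : ℤ} (hp : p ≠ 0) :
    (modeCoeff χ c m n p).support ⊆ Metric.ball 0 (2 * R₀ / |(p : ℝ)|) := by
  intro z hz
  contrapose! hz
  have hp_pos : 0 < |(p : ℝ)| := by positivity
  have h_large : 2 * R₀ ≤ |(p : ℝ)| * ‖z‖ := by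
    rw [Metric.mem_ball, dist_zero_right, not_lt, div_le_iff₀ hp_pos] at hz
    rwa [mul_comm |(p : ℝ)|]
  simp [modeCoeff, hχsupp _ h_large]

lemma div_rpow_mul_pow_sq_le {R x β : ℝ} {w : ℕ} (hR : 0 ≤ R) (hx : 0 < x) (hβ : β ≤ 2 * w) :
    (R / x) ^ β * (x ^ w) ^ 2 ≤ R ^ β * (1 + x ^ 2) ^ (w - β / 2) := by
  have h_exp : (x ^ 2) ^ (w - β / 2) = (x ^ w) ^ 2 / x ^ β := by
    rw [Real.rpow_sub (by positivity), Real.rpow_natCast, ← Real.rpow_two, ← Real.rpow_mul hx.le,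
      Real.rpow_two, mul_div_cancel₀ _ two_ne_zero, pow_right_comm]
  calc (R / x) ^ β * (x ^ w) ^ 2
      = R ^ β * (x ^ 2) ^ (w - β / 2) := by
        rw [h_exp, Real.div_rpow hR hx.le]
        ring
    _ ≤ R ^ β * (1 + x ^ 2) ^ (w - β / 2) := by
        gcongr
        · linarith
        · linarith

lemma lintegral_norm_rpow_mul_enorm_modeCoeff_sq_le (hR₀ : 0 < R₀) (hχ : ∀ s, |χ s| ≤ 1)
    (hχsupp : ∀ s, 2 * R₀ ≤ s → χ s = 0) (c : ℤ →₀ ℂ) (hβ : 0 < β)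
    (hβw : β ≤ 2 * (m + n : ℝ)) (p : ℤ) :
    ∫⁻ z, .ofReal (‖z‖ ^ (β - 2)) * ‖modeCoeff χ c m n p z‖ₑ ^ 2 ≤
      .ofReal (2 * Real.pi * ((2 * R₀) ^ β / β) *
        ((1 + (p : ℝ) ^ 2) ^ (m + n - β / 2) * ‖c p‖ ^ 2)) := by
  rcases eq_or_ne p 0 with rfl | hp
  · have hw : m + n ≠ 0 := by
      have : 0 < (m + n : ℝ) := by linarith
      exact_mod_cast this.ne'
    have h_zero (z : ℂ) : modeCoeff χ c m n 0 z = 0 := by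
      have h_le := norm_modeCoeff_le hχ c m n 0 z
      rwa [Int.cast_zero, abs_zero, zero_pow hw, zero_mul, norm_le_zero_iff] at h_le
    simp [h_zero]
  have hp_pos : 0 < |(p : ℝ)| := by positivity
  have volume_ball : volume.real (Metric.ball (0 : ℂ) 1) = Real.pi := by simp [measureReal_def]
  have h_radial := lintegral_norm_rpow_mul_enorm_sq_le_of_support_subset_ball volume hβ
    (by positivity) (norm_modeCoeff_le hχ c m n p) (support_modeCoeff_subset hχsupp c m n hp)
  rw [finrank_real_complex, Nat.cast_two, volume_ball] at h_radial
  refine h_radial.trans (ENNReal.ofReal_le_ofReal ?_)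
  calc 2 * Real.pi * ((2 * R₀ / |(p : ℝ)|) ^ β / β) * (|(p : ℝ)| ^ (m + n) * ‖c p‖) ^ 2
      = 2 * Real.pi / β * ‖c p‖ ^ 2 *
          ((2 * R₀ / |(p : ℝ)|) ^ β * (|(p : ℝ)| ^ (m + n)) ^ 2) := by ring
    _ ≤ 2 * Real.pi / β * ‖c p‖ ^ 2 *
          ((2 * R₀) ^ β * (1 + |(p : ℝ)| ^ 2) ^ ((m + n : ℕ) - β / 2)) :=
        mul_le_mul_of_nonneg_left
          (div_rpow_mul_pow_sq_le (by positivity) hp_pos (by exact_mod_cast hβw)) (by positivity)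
    _ = 2 * Real.pi * ((2 * R₀) ^ β / β) *
          ((1 + (p : ℝ) ^ 2) ^ (m + n - β / 2) * ‖c p‖ ^ 2) := by
        rw [sq_abs, Nat.cast_add]
        ring

lemma lintegral_norm_rpow_mul_enorm_modeMult_sq_le (hR₀ : 0 < R₀) (hχm : Measurable χ)
    (hχ : ∀ s, |χ s| ≤ 1) (hχsupp : ∀ s, 2 * R₀ ≤ s → χ s = 0) (c : ℤ →₀ ℂ) (hβ : 0 < β)
    (hβw : β ≤ 2 * (m + n : ℝ)) :
    ∫⁻ q : Circ × ℂ, .ofReal (‖q.2‖ ^ (β - 2)) * ‖modeMult χ c m n q‖ₑ ^ 2 ≤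
      .ofReal ((2 * Real.pi) ^ 2 * ((2 * R₀) ^ β / β) * sobNormSq c (m + n - β / 2)) := by
  calc ∫⁻ q : Circ × ℂ, .ofReal (‖q.2‖ ^ (β - 2)) * ‖modeMult χ c m n q‖ₑ ^ 2
      = .ofReal (2 * Real.pi) * ∑ p ∈ c.support,
          ∫⁻ z, .ofReal (‖z‖ ^ (β - 2)) * ‖modeCoeff χ c m n p z‖ₑ ^ 2 := by
        simp_rw [modeMult_eq_sum_modeCoeff]
        rw [Measure.volume_eq_prod, lintegral_prod_mul_enorm_sq_sum_fourier volume
          (w := fun z : ℂ ↦ .ofReal (‖z‖ ^ (β - 2))) (by fun_prop) c.support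
          (measurable_modeCoeff hχm c m n)]
    _ ≤ .ofReal (2 * Real.pi) * ∑ p ∈ c.support, .ofReal (2 * Real.pi * ((2 * R₀) ^ β / β) *
          ((1 + (p : ℝ) ^ 2) ^ (m + n - β / 2) * ‖c p‖ ^ 2)) := by
        gcongr with p
        exact lintegral_norm_rpow_mul_enorm_modeCoeff_sq_le hR₀ hχ hχsupp c hβ hβw p
    _ = .ofReal ((2 * Real.pi) ^ 2 * ((2 * R₀) ^ β / β) * sobNormSq c (m + n - β / 2)) := by
        rw [← ENNReal.ofReal_sum_of_nonneg fun p _ ↦ by positivity,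
          ← ENNReal.ofReal_mul (by positivity), ← Finset.mul_sum, sobNormSq]
        ring_nf

end ModeEstimates

section WeightedProductMeasure

lemma μN_le_volume (r₀ : ℝ) : μN r₀ ≤ volume :=
  Measure.prod_mono le_rfl Measure.restrict_le_self

lemma ae_μN_norm_snd_pos (r₀ : ℝ) : ∀ᵐ q ∂(μN r₀), 0 < ‖q.2‖ := by
  have measurableSet_punctDisk : MeasurableSet (punctDisk r₀) :=
    (measurableSet_lt measurable_const measurable_norm).inter
      (measurableSet_le measurable_norm measurable_const)
  exact Measure.quasiMeasurePreserving_snd.ae <|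
    (ae_restrict_mem measurableSet_punctDisk).mono fun _ hz ↦ hz.1

lemma lintegral_μN_norm_sq_mul_le {E F : Type*} [NormedAddCommGroup E] [NormedAddCommGroup F]
    {r₀ B σ γ : ℝ} (u : Circ × ℂ → E) {G : Circ × ℂ → F}
    (hG : ∀ᵐ q ∂(μN r₀), ‖G q‖ ≤ B * ‖q.2‖ ^ σ) :
    ∫⁻ q, .ofReal (‖u q‖ ^ 2 * ‖G q‖ ^ 2 * ‖q.2‖ ^ γ) ∂(μN r₀) ≤
      .ofReal (B ^ 2) * ∫⁻ q : Circ × ℂ, .ofReal (‖q.2‖ ^ (2 * σ + γ)) * ‖u q‖ₑ ^ 2 := by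
  rw [← lintegral_const_mul' _ _ ENNReal.ofReal_ne_top]
  refine (lintegral_mono_ae ?_).trans (lintegral_mono' (μN_le_volume r₀) le_rfl)
  filter_upwards [hG, ae_μN_norm_snd_pos r₀] with q hGq hq
  rw [← ofReal_norm, ← ENNReal.ofReal_pow (norm_nonneg _), ← ENNReal.ofReal_mul (by positivity),
    ← ENNReal.ofReal_mul (by positivity)]
  refine ENNReal.ofReal_le_ofReal ?_
  calc ‖u q‖ ^ 2 * ‖G q‖ ^ 2 * ‖q.2‖ ^ γ
      ≤ ‖u q‖ ^ 2 * (B * ‖q.2‖ ^ σ) ^ 2 * ‖q.2‖ ^ γ := by gcongr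
    _ = B ^ 2 * (‖q.2‖ ^ (2 * σ + γ) * ‖u q‖ ^ 2) := by
        rw [Real.rpow_add hq, mul_comm 2 σ, Real.rpow_mul hq.le, Real.rpow_two]
        ring

end WeightedProductMeasure

theorem modeMult_effective_support_general {E : Type*} [NormedAddCommGroup E] {r₀ R₀ : ℝ}
    (hR₀ : 0 < R₀) {χ : ℝ → ℝ} (hχm : Measurable χ) (hχ : ∀ s, |χ s| ≤ 1)
    (hχsupp : ∀ s, 2 * R₀ ≤ s → χ s = 0) {m n : ℕ} {ν k : ℝ} (hν : 0 ≤ ν)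
    (hνw : ν < m + n - 1 / 2) (hνk : ν ≤ k) {C₁ M : ℝ} (hM : 0 < M) {c : ℤ →₀ ℂ}
    (hc : sobNorm c (k + 1 / 2) ≤ C₁ * M ^ k * sobNorm c (1 / 2)) {C₀ : ℝ} {G : Circ × ℂ → E}
    (hG : ∀ᵐ q ∂(μN r₀), ‖G q‖ ≤ C₀ * ‖q.2‖ ^ ((m : ℝ) + n - 3 / 2)) :
    ∫⁻ q, .ofReal (‖modeMult χ c m n q‖ ^ 2 * ‖G q‖ ^ 2 * ‖q.2‖ ^ (-(2 * ν))) ∂(μN r₀) ≤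
      .ofReal ((2 * Real.pi) ^ 2 *
        ((2 * R₀) ^ (2 * (m + n - 1 / 2 - ν)) / (2 * (m + n - 1 / 2 - ν))) * (1 + C₁ ^ 2) *
        C₀ ^ 2 * M ^ (2 * ν) * sobNorm c (1 / 2) ^ 2) := by
  set β : ℝ := 2 * (m + n - 1 / 2 - ν) with hβ_def
  have hβ : 0 < β := by linarith
  have weight_exponent : 2 * ((m : ℝ) + n - 3 / 2) + -(2 * ν) = β - 2 := by rw [hβ_def]; ring
  have sobolev_exponent : (m : ℝ) + n - β / 2 = 1 / 2 + ν := by rw [hβ_def]; ring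
  calc ∫⁻ q, .ofReal (‖modeMult χ c m n q‖ ^ 2 * ‖G q‖ ^ 2 * ‖q.2‖ ^ (-(2 * ν))) ∂(μN r₀)
      ≤ .ofReal (C₀ ^ 2) *
          ∫⁻ q : Circ × ℂ, .ofReal (‖q.2‖ ^ (β - 2)) * ‖modeMult χ c m n q‖ₑ ^ 2 :=
        weight_exponent ▸ lintegral_μN_norm_sq_mul_le _ hG
    _ ≤ .ofReal (C₀ ^ 2) *
          .ofReal ((2 * Real.pi) ^ 2 * ((2 * R₀) ^ β / β) * sobNormSq c (1 / 2 + ν)) := by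
        rw [← sobolev_exponent]
        gcongr
        exact lintegral_norm_rpow_mul_enorm_modeMult_sq_le hR₀ hχm hχ hχsupp c hβ (by linarith)
    _ ≤ .ofReal (C₀ ^ 2) * .ofReal ((2 * Real.pi) ^ 2 * ((2 * R₀) ^ β / β) *
          ((1 + C₁ ^ 2) * M ^ (2 * ν) * sobNorm c (1 / 2) ^ 2)) := by
        gcongr
        exact sobNormSq_add_le_of_sobNorm_le hν hνk hM hc
    _ = _ := by
        rw [← ENNReal.ofReal_mul (by positivity)]
        ring_nf

/-- Effective support of mode-dependent deformation terms at scale `1/M`. -/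
theorem modeMult_effective_support (r₀ R₀ : ℝ) (hr₀ : 0 < r₀) (hR₀ : 0 < R₀)
    (χ : ℝ → ℝ) (hχm : Measurable χ) (hχ01 : ∀ s, χ s ∈ Set.Icc (0 : ℝ) 1)
    (hχsupp : ∀ s, 2 * R₀ ≤ s → χ s = 0)
    (m n : ℕ) (hw : m + n = 1 ∨ m + n = 2)
    (ν : ℝ) (hν : ν ∈ Set.Ico (0 : ℝ) (1/2)) (C₁ : ℝ) (hC₁ : 1 ≤ C₁) :
    ∃ C : ℝ, 0 < C ∧
      ∀ M : ℝ, 1 ≤ M →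
      ∀ c : ℤ →₀ ℂ,
        (∀ m' : ℕ, sobNorm c ((m' : ℝ) + 1/2) ≤ C₁ * M ^ m' * sobNorm c (1/2)) →
        ∀ (C₀ : ℝ), 0 ≤ C₀ →
        ∀ G : Circ × ℂ → ℂ, Measurable G →
          (∀ᵐ q ∂(μN r₀), ‖G q‖ ≤ C₀ * ‖q.2‖ ^ ((m : ℝ) + n - 3/2)) →
          ∫⁻ q, ENNReal.ofReal
              (‖modeMult χ c m n q‖ ^ 2 * ‖G q‖ ^ 2 * ‖q.2‖ ^ (-(2 * ν))) ∂(μN r₀)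
            ≤ ENNReal.ofReal
                (C * C₀ ^ 2 * M ^ (2 * ν) * sobNorm c (1/2) ^ 2) := by
  have hνw : ν < m + n - 1/2 := by
    have : (1 : ℝ) ≤ m + n := by exact_mod_cast (by omega : 1 ≤ m + n)
    linarith [hν.2]
  have hχ (s : ℝ) : |χ s| ≤ 1 := abs_le.2 ⟨by linarith [(hχ01 s).1], (hχ01 s).2⟩
  exact ⟨_, by positivity, fun M hM c hc C₀ _ G _ hG ↦ modeMult_effective_support_general
    (C₁ := C₁) (k := 1) hR₀ hχm hχ hχsupp hν.1 hνw (by linarith [hν.2]) (by linarith)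
    (by simpa using hc 1) hG⟩
end
end

section
/- Scalar implicit-function lemma with two-thirds power bounds (the paper's Lemma used to kill the one-dimensional obstruction, Section 12). Let tau_0, eps_0 > 0 and C_0 >= 0. Let Lambda : (-tau_0, tau_0) -> R be continuously differentiable with Lambda(0) = 0 and Lambda'(0) not equal to 0, and let mu : (0, eps_0) x (-tau_0, tau_0) -> R be continuously differentiable with |mu(eps, tau)| <= C_0 * eps^{2/3} and |(d/dtau) mu(eps, tau)| <= C_0 * eps^{2/3} for all (eps, tau). Then there exist eps_1 in (0, eps_0], delta in (0, tau_0), and a continuously differentiable function tau_star : (0, eps_1) -> (-delta, delta) such that for every eps in (0, eps_1): (i) Lambda(tau_star(eps)) + mu(eps, tau_star(eps)) = 0; (ii) tau_star(eps) is the unique tau in (-delta, delta) with Lambda(tau) + mu(eps, tau) = 0; (iii) |tau_star(eps)| <= (2 C_0 / |Lambda'(0)|) * eps^{2/3}; and (iv) if Lambda'(0) > 0 then tau_star(eps) > 0 if and only if mu(eps, tau_star(eps)) < 0, while if Lambda'(0) < 0 then tau_star(eps) > 0 if and only if mu(eps, tau_star(eps)) > 0. -/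
open Set

/-!
Dividing `Λ` and `μ` by `Λ'(0)` makes the slope of `Λ` at `0` equal to `1`, whatever its sign was.
On a small interval `[-δ, δ]` the slope is then at least `1 / 2`, and for small `ε` the perturbation
`μ ε` is too small to spoil either the monotonicity of `Λ + μ ε` or its opposite signs at `±δ`, so
it has exactly one root. Uniqueness forces this root to agree near each `ε` with the local solution
supplied by the implicit function theorem, which makes it smooth. Finally `Λ τ = -μ ε τ` at the
root, so the growth and the monotonicity of `Λ` alone give the size and the sign of the root.
-/

open Filter
open scoped Topology ContDiff

section ImplicitFunction

variable {𝕜 E F G : Type*} [RCLike 𝕜]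
  [NormedAddCommGroup E] [NormedSpace 𝕜 E]
  [NormedAddCommGroup F] [NormedSpace 𝕜 F]
  [NormedAddCommGroup G] [NormedSpace 𝕜 G]

theorem contDiffAt_of_eventually_unique_root [CompleteSpace E] [CompleteSpace F] [CompleteSpace G]
    {n : ℕ∞ω} (hn : n ≠ 0) {f : E × F → G} {g : E → F} {x : E} {V : Set F}
    (hf : ContDiffAt 𝕜 n f (x, g x))
    (hf' : (fderiv 𝕜 f (x, g x) ∘L .inr 𝕜 E F).IsInvertible)
    (hroot : f (x, g x) = 0) (hV : V ∈ 𝓝 (g x))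
    (hunique : ∀ᶠ y in 𝓝 x, ∀ v ∈ V, f (y, v) = 0 → v = g y) :
    ContDiffAt 𝕜 n g x := by
  have hψ := hf.contDiffAt_implicitFunction hn hf'
  have hψx : hf.implicitFunction hn hf' x = g x := hf.implicitFunction_apply_self hn hf'
  have hψV : ∀ᶠ y in 𝓝 x, hf.implicitFunction hn hf' y ∈ V :=
    hψ.continuousAt.eventually (by rwa [hψx])
  refine hψ.congr_of_eventuallyEq ?_
  filter_upwards [hf.eventually_apply_implicitFunction hn hf', hψV, hunique]
    with y hψroot hψmem huniq
  exact (huniq _ hψmem (hψroot.trans hroot)).symm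

theorem isInvertible_fderiv_comp_inr_of_deriv_ne_zero {f : E × 𝕜 → 𝕜} {x : E} {t : 𝕜}
    (hf : DifferentiableAt 𝕜 f (x, t)) (hf' : deriv (fun s => f (x, s)) t ≠ 0) :
    (fderiv 𝕜 f (x, t) ∘L .inr 𝕜 E 𝕜).IsInvertible := by
  have hpartial : HasFDerivAt (fun s => f (x, s)) (fderiv 𝕜 f (x, t) ∘L .inr 𝕜 E 𝕜) t :=
    hf.hasFDerivAt.comp t (hasFDerivAt_prodMk_right x t)
  exact ⟨_, (hpartial.differentiableAt.hasDerivAt.hasFDerivAt_equiv hf').unique hpartial⟩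

end ImplicitFunction

section PerturbedRoot

variable {Λ : ℝ → ℝ} {s : Set ℝ} {c δ : ℝ}

theorem mul_abs_sub_le_abs_image_sub_of_le_deriv (hs : Convex ℝ s)
    (hΛ : ∀ t ∈ s, DifferentiableAt ℝ Λ t) (hslope : ∀ t ∈ s, c ≤ deriv Λ t)
    {x y : ℝ} (hx : x ∈ s) (hy : y ∈ s) : c * |y - x| ≤ |Λ y - Λ x| := by
  wlog hxy : x ≤ y generalizing x y
  · rw [abs_sub_comm y, abs_sub_comm (Λ y)]
    exact this hy hx (le_of_not_ge hxy)
  rw [abs_of_nonneg (sub_nonneg.2 hxy)]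
  refine (hs.mul_sub_le_image_sub_of_le_deriv ?_ ?_ ?_ x hx y hy hxy).trans (le_abs_self _)
  · exact fun t ht => (hΛ t ht).continuousAt.continuousWithinAt
  · exact fun t ht => (hΛ t (interior_subset ht)).differentiableWithinAt
  · exact fun t ht => hslope t (interior_subset ht)

theorem pos_iff_neg_of_strictMonoOn_of_add_eq_zero (hΛ : StrictMonoOn Λ s) (hΛ0 : Λ 0 = 0)
    (h0 : 0 ∈ s) {t y : ℝ} (ht : t ∈ s) (hroot : Λ t + y = 0) : 0 < t ↔ y < 0 := by
  rw [← hΛ.lt_iff_lt h0 ht, hΛ0, eq_neg_of_add_eq_zero_left hroot, neg_pos]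

theorem existsUnique_root_of_strictMonoOn {f : ℝ → ℝ} {a b : ℝ} (hab : a ≤ b)
    (hf : ContinuousOn f (Icc a b)) (hmono : StrictMonoOn f (Icc a b))
    (ha : f a < 0) (hb : 0 < f b) : ∃! t, t ∈ Ioo a b ∧ f t = 0 := by
  obtain ⟨t, ht, hroot⟩ := intermediate_value_Ioo hab hf ⟨ha, hb⟩
  exact ⟨t, ⟨ht, hroot⟩, fun u ⟨hu, hu0⟩ =>
    hmono.injOn (Ioo_subset_Icc_self hu) (Ioo_subset_Icc_self ht) (hu0.trans hroot.symm)⟩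

theorem deriv_add_pos_of_abs_deriv_lt {m : ℝ → ℝ} {t : ℝ} (hΛ : DifferentiableAt ℝ Λ t)
    (hm : DifferentiableAt ℝ m t) (hlt : |deriv m t| < deriv Λ t) :
    0 < deriv (fun u => Λ u + m u) t := by
  rw [deriv_fun_add hΛ hm]
  linarith [neg_abs_le (deriv m t)]

theorem existsUnique_add_eq_zero_of_le_deriv {m : ℝ → ℝ} (hδ : 0 < δ)
    (hΛ : ∀ t ∈ Icc (-δ) δ, DifferentiableAt ℝ Λ t) (hΛ0 : Λ 0 = 0)
    (hslope : ∀ t ∈ Icc (-δ) δ, c ≤ deriv Λ t)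
    (hm : ∀ t ∈ Icc (-δ) δ, DifferentiableAt ℝ m t)
    (hm_lt : ∀ t ∈ Icc (-δ) δ, |m t| < c * δ)
    (hm'_lt : ∀ t ∈ Icc (-δ) δ, |deriv m t| < c) :
    ∃! t, t ∈ Ioo (-δ) δ ∧ Λ t + m t = 0 := by
  have hΛc : ContinuousOn Λ (Icc (-δ) δ) := fun t ht => (hΛ t ht).continuousAt.continuousWithinAt
  have hmc : ContinuousOn m (Icc (-δ) δ) := fun t ht => (hm t ht).continuousAt.continuousWithinAt
  have hgrowth := (convex_Icc (-δ) δ).mul_sub_le_image_sub_of_le_deriv hΛc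
    (fun t ht => (hΛ t (interior_subset ht)).differentiableWithinAt)
    (fun t ht => hslope t (interior_subset ht))
  have hl : -δ ∈ Icc (-δ) δ := ⟨le_rfl, by linarith⟩
  have h0 : (0 : ℝ) ∈ Icc (-δ) δ := ⟨by linarith, hδ.le⟩
  have hr : δ ∈ Icc (-δ) δ := ⟨by linarith, le_rfl⟩
  refine existsUnique_root_of_strictMonoOn hl.2 (hΛc.add hmc)
    (strictMonoOn_of_deriv_pos (convex_Icc _ _) (hΛc.add hmc) fun t ht => ?_) ?_ ?_
  · have ht := interior_subset ht
    exact deriv_add_pos_of_abs_deriv_lt (hΛ t ht) (hm t ht) ((hm'_lt t ht).trans_le (hslope t ht))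
  · linarith [hgrowth _ hl _ h0 h0.1, hm_lt _ hl, le_abs_self (m (-δ))]
  · linarith [hgrowth _ h0 _ hr hδ.le, hm_lt _ hr, neg_abs_le (m δ)]

theorem exists_contDiffOn_root_of_le_deriv {E : Type*} [NormedAddCommGroup E] [NormedSpace ℝ E]
    [CompleteSpace E] {n : ℕ∞ω} (hn : n ≠ 0) {m : E → ℝ → ℝ} {U : Set E} (hU : IsOpen U)
    (hc : 0 < c) (hδ : 0 < δ)
    (hΛ : ∀ t ∈ Icc (-δ) δ, ContDiffAt ℝ n Λ t) (hΛ0 : Λ 0 = 0)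
    (hslope : ∀ t ∈ Icc (-δ) δ, c ≤ deriv Λ t)
    (hm : ∀ x ∈ U, ∀ t ∈ Icc (-δ) δ, ContDiffAt ℝ n (fun p : E × ℝ => m p.1 p.2) (x, t))
    (hm_lt : ∀ x ∈ U, ∀ t ∈ Icc (-δ) δ, |m x t| < c * δ)
    (hm'_lt : ∀ x ∈ U, ∀ t ∈ Icc (-δ) δ, |deriv (m x) t| < c) :
    ∃ g : E → ℝ, ContDiffOn ℝ n g U ∧ ∀ x ∈ U,
      g x ∈ Ioo (-δ) δ ∧ Λ (g x) + m x (g x) = 0 ∧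
      (∀ t ∈ Ioo (-δ) δ, Λ t + m x t = 0 → t = g x) ∧
      c * |g x| ≤ |m x (g x)| ∧ (0 < g x ↔ m x (g x) < 0) := by
  have hΛd : ∀ t ∈ Icc (-δ) δ, DifferentiableAt ℝ Λ t :=
    fun t ht => (hΛ t ht).differentiableAt hn
  have hmd : ∀ x ∈ U, ∀ t ∈ Icc (-δ) δ, DifferentiableAt ℝ (m x) t := fun x hx t ht =>
    ((hm x hx t ht).differentiableAt hn).comp t (f := fun u : ℝ => (x, u)) (by fun_prop)
  choose! g hg hunique using fun x hx =>
    existsUnique_add_eq_zero_of_le_deriv hδ hΛd hΛ0 hslope (hmd x hx) (hm_lt x hx) (hm'_lt x hx)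
  refine ⟨g, fun x hx => ContDiffAt.contDiffWithinAt ?_, fun x hx => ?_⟩
  · have hgx := Ioo_subset_Icc_self (hg x hx).1
    have hF : ContDiffAt ℝ n (fun p : E × ℝ => Λ p.2 + m p.1 p.2) (x, g x) :=
      ((hΛ _ hgx).comp (x, g x) contDiffAt_snd).add (hm x hx _ hgx)
    have hF' : 0 < deriv (fun t => Λ t + m x t) (g x) := deriv_add_pos_of_abs_deriv_lt
      (hΛd _ hgx) (hmd x hx _ hgx) ((hm'_lt x hx _ hgx).trans_le (hslope _ hgx))
    refine contDiffAt_of_eventually_unique_root hn hF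
      (isInvertible_fderiv_comp_inr_of_deriv_ne_zero (hF.differentiableAt hn) hF'.ne')
      (hg x hx).2 (isOpen_Ioo.mem_nhds (hg x hx).1) ?_
    filter_upwards [hU.mem_nhds hx] with y hy t ht hroot using hunique y hy t ⟨ht, hroot⟩
  · obtain ⟨hgx, hroot⟩ := hg x hx
    have hgI := Ioo_subset_Icc_self hgx
    have h0 : (0 : ℝ) ∈ Icc (-δ) δ := ⟨by linarith, hδ.le⟩
    have hmono : StrictMonoOn Λ (Icc (-δ) δ) := strictMonoOn_of_deriv_pos (convex_Icc _ _)
      (fun t ht => (hΛd t ht).continuousAt.continuousWithinAt)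
      fun t ht => hc.trans_le (hslope t (interior_subset ht))
    refine ⟨hgx, hroot, fun t ht ht0 => hunique x hx t ⟨ht, ht0⟩, ?_,
      pos_iff_neg_of_strictMonoOn_of_add_eq_zero hmono hΛ0 h0 hgI hroot⟩
    simpa [hΛ0, eq_neg_of_add_eq_zero_left hroot] using
      mul_abs_sub_le_abs_image_sub_of_le_deriv (convex_Icc _ _) hΛd hslope h0 hgI

end PerturbedRoot

theorem exists_Icc_half_le_deriv_div {n : ℕ∞ω} (hn : n ≠ 0) {τ₀ : ℝ} (hτ₀ : 0 < τ₀) {Λ : ℝ → ℝ}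
    (hΛ : ContDiffOn ℝ n Λ (Ioo (-τ₀) τ₀)) (hΛ' : deriv Λ 0 ≠ 0) :
    ∃ δ ∈ Ioo 0 τ₀, ∀ t ∈ Icc (-δ) δ, 1 / 2 ≤ deriv Λ t / deriv Λ 0 := by
  have hnhds : Ioo (-τ₀) τ₀ ∈ 𝓝 0 := Ioo_mem_nhds (neg_neg_iff_pos.2 hτ₀) hτ₀
  have hcont : ContinuousAt (fun t => deriv Λ t / deriv Λ 0) 0 :=
    ((hΛ.continuousOn_deriv_of_isOpen isOpen_Ioo
      (ENat.one_le_iff_ne_zero_withTop.2 hn)).continuousAt hnhds).div_const _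
  have hhalf : ∀ᶠ t in 𝓝 0, 1 / 2 < deriv Λ t / deriv Λ 0 :=
    hcont.eventually_const_lt (by simpa only [div_self hΛ'] using one_half_lt_one)
  obtain ⟨δ, hδ, hIcc⟩ := (nhds_basis_Icc_pos 0).eventually_iff.1 (hhalf.and hnhds)
  simp only [zero_sub, zero_add] at hIcc
  exact ⟨δ, ⟨hδ, (hIcc ⟨by linarith, le_rfl⟩).2.2⟩, fun t ht => (hIcc ht).1.le⟩

theorem one_dimensional_obstruction_implicit_function_general
    {n : ℕ∞ω} (hn : n ≠ 0) {τ₀ ε₀ : ℝ} (hτ₀ : 0 < τ₀) (hε₀ : 0 < ε₀)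
    {Λ : ℝ → ℝ} {μ : ℝ → ℝ → ℝ} {β γ : ℝ → ℝ}
    (hβ : Tendsto β (𝓝[>] 0) (𝓝 0)) (hγ : Tendsto γ (𝓝[>] 0) (𝓝 0))
    (hΛ : ContDiffOn ℝ n Λ (Ioo (-τ₀) τ₀)) (hΛ0 : Λ 0 = 0) (hΛ' : deriv Λ 0 ≠ 0)
    (hμ : ContDiffOn ℝ n (fun p : ℝ × ℝ => μ p.1 p.2) (Ioo 0 ε₀ ×ˢ Ioo (-τ₀) τ₀))
    (hμβ : ∀ ε ∈ Ioo 0 ε₀, ∀ τ ∈ Ioo (-τ₀) τ₀, |μ ε τ| ≤ β ε)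
    (hμγ : ∀ ε ∈ Ioo 0 ε₀, ∀ τ ∈ Ioo (-τ₀) τ₀, |deriv (μ ε) τ| ≤ γ ε) :
    ∃ ε₁ δ : ℝ, ∃ τs : ℝ → ℝ,
      0 < ε₁ ∧ ε₁ ≤ ε₀ ∧ 0 < δ ∧ δ < τ₀ ∧
      ContDiffOn ℝ n τs (Ioo 0 ε₁) ∧
      ∀ ε ∈ Ioo (0 : ℝ) ε₁,
        τs ε ∈ Ioo (-δ) δ ∧
        Λ (τs ε) + μ ε (τs ε) = 0 ∧
        (∀ τ ∈ Ioo (-δ) δ, Λ τ + μ ε τ = 0 → τ = τs ε) ∧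
        |τs ε| ≤ 2 * β ε / |deriv Λ 0| ∧
        (0 < deriv Λ 0 → (0 < τs ε ↔ μ ε (τs ε) < 0)) ∧
        (deriv Λ 0 < 0 → (0 < τs ε ↔ 0 < μ ε (τs ε))) := by
  obtain ⟨δ, ⟨hδ, hδτ₀⟩, hslope⟩ := exists_Icc_half_le_deriv_div hn hτ₀ hΛ hΛ'
  set a := deriv Λ 0
  have ha : 0 < |a| := abs_pos.2 hΛ'
  obtain ⟨ε₁, ⟨hε₁, hε₁ε₀⟩, hsmall⟩ := (mem_nhdsGT_iff_exists_mem_Ioc_Ioo_subset hε₀).1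
    ((hβ.eventually_lt_const (show 0 < 1 / 2 * δ * |a| by positivity)).and
      (hγ.eventually_lt_const (show 0 < 1 / 2 * |a| by positivity)))
  have hI : Icc (-δ) δ ⊆ Ioo (-τ₀) τ₀ := Icc_subset_Ioo (neg_lt_neg hδτ₀) hδτ₀
  have hU : Ioo 0 ε₁ ⊆ Ioo 0 ε₀ := Ioo_subset_Ioo_right hε₁ε₀
  have hdom : IsOpen (Ioo 0 ε₀ ×ˢ Ioo (-τ₀) τ₀) := isOpen_Ioo.prod isOpen_Ioo
  obtain ⟨τs, hτs, hroot⟩ := exists_contDiffOn_root_of_le_deriv hn (U := Ioo 0 ε₁)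
    (Λ := fun t => Λ t / a) (m := fun ε t => μ ε t / a) isOpen_Ioo one_half_pos hδ
    (fun t ht => (hΛ.contDiffAt (isOpen_Ioo.mem_nhds (hI ht))).div_const a) (by simp [hΛ0])
    (by simpa only [deriv_div_const] using hslope)
    (fun ε hε t ht => (hμ.contDiffAt (hdom.mem_nhds ⟨hU hε, hI ht⟩)).div_const a)
    (fun ε hε t ht => by
      rw [abs_div, div_lt_iff₀ ha]
      exact (hμβ ε (hU hε) t (hI ht)).trans_lt (hsmall hε).1)
    (fun ε hε t ht => by
      rw [deriv_div_const, abs_div, div_lt_iff₀ ha]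
      exact (hμγ ε (hU hε) t (hI ht)).trans_lt (hsmall hε).2)
  refine ⟨ε₁, δ, τs, hε₁, hε₁ε₀, hδ, hδτ₀, hτs, fun ε hε => ?_⟩
  obtain ⟨hmem, hzero, hunique, hbound, hsign⟩ := hroot ε hε
  simp only [← add_div, div_eq_zero_iff, hΛ', or_false] at hzero hunique
  refine ⟨hmem, hzero, hunique, ?_, fun hpos => ?_, fun hneg => ?_⟩
  · rw [abs_div, le_div_iff₀ ha] at hbound
    rw [le_div_iff₀ ha]
    linarith [hμβ ε (hU hε) _ (hI (Ioo_subset_Icc_self hmem))]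
  · rw [hsign, div_lt_iff₀ hpos, zero_mul]
  · rw [hsign, div_lt_iff_of_neg hneg, zero_mul]

theorem tendsto_const_mul_rpow_nhdsGT_zero (C : ℝ) {p : ℝ} (hp : 0 < p) :
    Tendsto (fun x : ℝ => C * x ^ p) (𝓝[>] 0) (𝓝 0) := by
  have hcont : ContinuousAt (fun x : ℝ => C * x ^ p) 0 :=
    continuousAt_const.mul (Real.continuousAt_rpow_const _ _ (Or.inr hp.le))
  simpa [Real.zero_rpow hp.ne'] using hcont.tendsto.mono_left nhdsWithin_le_nhds

/-- Scalar implicit-function lemma with two-thirds power bounds,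
used to kill the one-dimensional obstruction. -/
theorem one_dimensional_obstruction_implicit_function
    (τ₀ ε₀ C₀ : ℝ) (hτ₀ : 0 < τ₀) (hε₀ : 0 < ε₀) (hC₀ : 0 ≤ C₀)
    (Λ : ℝ → ℝ) (μ : ℝ → ℝ → ℝ)
    (hΛ : ContDiffOn ℝ 1 Λ (Ioo (-τ₀) τ₀))
    (hΛ0 : Λ 0 = 0) (hΛ' : deriv Λ 0 ≠ 0)
    (hμ : ContDiffOn ℝ 1 (fun p : ℝ × ℝ => μ p.1 p.2) (Ioo 0 ε₀ ×ˢ Ioo (-τ₀) τ₀))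
    (hμb : ∀ ε ∈ Ioo (0 : ℝ) ε₀, ∀ τ ∈ Ioo (-τ₀) τ₀,
      |μ ε τ| ≤ C₀ * ε ^ (2/3 : ℝ))
    (hμτb : ∀ ε ∈ Ioo (0 : ℝ) ε₀, ∀ τ ∈ Ioo (-τ₀) τ₀,
      |deriv (fun t => μ ε t) τ| ≤ C₀ * ε ^ (2/3 : ℝ)) :
    ∃ ε₁ δ : ℝ, ∃ τs : ℝ → ℝ,
      0 < ε₁ ∧ ε₁ ≤ ε₀ ∧ 0 < δ ∧ δ < τ₀ ∧
      ContDiffOn ℝ 1 τs (Ioo 0 ε₁) ∧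
      ∀ ε ∈ Ioo (0 : ℝ) ε₁,
        τs ε ∈ Ioo (-δ) δ ∧
        Λ (τs ε) + μ ε (τs ε) = 0 ∧
        (∀ τ ∈ Ioo (-δ) δ, Λ τ + μ ε τ = 0 → τ = τs ε) ∧
        |τs ε| ≤ 2 * C₀ / |deriv Λ 0| * ε ^ (2/3 : ℝ) ∧
        (0 < deriv Λ 0 → (0 < τs ε ↔ μ ε (τs ε) < 0)) ∧
        (deriv Λ 0 < 0 → (0 < τs ε ↔ 0 < μ ε (τs ε))) := by
  have hrate := tendsto_const_mul_rpow_nhdsGT_zero C₀ (p := 2 / 3) (by norm_num)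
  simpa only [div_mul_eq_mul_div, mul_assoc] using
    one_dimensional_obstruction_implicit_function_general one_ne_zero hτ₀ hε₀ hrate hrate
      hΛ hΛ0 hΛ' hμ hμb hμτb
end
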